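/- (Relaxed finite-time stability criterion.) Under the standing assumptions on the delayed system, let 0 < ε₁ < ε₂ and suppose there exists η > 0 such that D(ε₁, ρ) := ( ((a₀+a₁)/η) E_β((a₀+a₁+η)(T−t₀)^β) + 1 ) ε₁ + (a₂/η) E_β((a₀+a₁+η)(T−t₀)^β) ρ ≤ ε₂. Then for every initial function ν with sup_{s∈[t₀−g,t₀]} ‖ν(s)‖ ≤ ε₁ and every disturbance d with ‖d(t)‖ ≤ ρ, any continuous x : [t₀−g, T] → ℝⁿ satisfying x = ν on [t₀−g, t₀] and x(t) = ν(t₀) + (1/Γ(β)) ∫_{t₀}^t (t−s)^{β−1} [A₀ x(s) + A₁ x(s−g(s)) + A₂ d(s) + f(s, x(s), x(s−g(s)), d(s))] ds for t ∈ [t₀, T] satisfies ‖x(t)‖ ≤ ε₂ for all t ∈ [t₀, T]. -/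

import Mathlib

open Set ENNReal MeasureTheory intervalIntegral

/-- Euclidean `ℝⁿ`. -/
abbrev Euc (n : ℕ) := EuclideanSpace ℝ (Fin n)

/-- The Mittag-Leffler function `E_β(t) = Σ_{b ≥ 0} t^b / Γ(bβ + 1)`. -/
noncomputable def mittagLeffler (β t : ℝ) : ℝ :=
  ∑' b : ℕ, t ^ b / Real.Gamma (b * β + 1)

/-- The weight function: `h(s) = 1` for `s ≤ t₀` and `h(s) = E_β(θ (s − t₀)^β)` for `s ≥ t₀`. -/
noncomputable def weight (β t₀ θ : ℝ) (s : ℝ) : ℝ :=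
  if s ≤ t₀ then 1 else mittagLeffler β (θ * (s - t₀) ^ β)

/-- The weighted generalized metric
`ϖ(x₁, x₂) = inf { b ∈ [0, ∞] : ‖x₁(t) − x₂(t)‖ ≤ b h(t) for all t ∈ [t₀ − g, T] }`. -/
noncomputable def genDist {n : ℕ} (β t₀ T g θ : ℝ) (x₁ x₂ : ℝ → Euc n) : ℝ≥0∞ :=
  sInf {b : ℝ≥0∞ | ∀ t ∈ Icc (t₀ - g) T,
    (‖x₁ t - x₂ t‖₊ : ℝ≥0∞) ≤ b * ENNReal.ofReal (weight β t₀ θ t)}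

/-- The integral operator `𝒱`:
`(𝒱 y)(t) = ν(t)` on `[t₀ − g, t₀]` and
`(𝒱 y)(t) = ν(t₀) + (1/Γ(β)) ∫_{t₀}^t (t−s)^{β−1} [A₀ y(s) + A₁ y(s−g(s)) + A₂ d(s)
  + f(s, y(s), y(s−g(s)), d(s))] ds` on `[t₀, T]`. -/
noncomputable def Vop {n p : ℕ} (β t₀ : ℝ)
    (A₀ A₁ : Euc n →L[ℝ] Euc n) (A₂ : Euc p →L[ℝ] Euc n)
    (f : ℝ → Euc n → Euc n → Euc p → Euc n) (d : ℝ → Euc p) (gdel : ℝ → ℝ)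
    (ν : ℝ → Euc n) (y : ℝ → Euc n) : ℝ → Euc n :=
  fun t =>
    if t ≤ t₀ then ν t
    else ν t₀ + (Real.Gamma β)⁻¹ •
      ∫ s in t₀..t, ((t - s) ^ (β - 1)) •
        (A₀ (y s) + A₁ (y (s - gdel s)) + A₂ (d s) + f s (y s) (y (s - gdel s)) (d s))

/-- For `R > 0`, `x ≥ 0`, the Gamma function dominates `R ^ x` up to the constant `exp (-R)`. -/
theorem exp_neg_mul_rpow_le_Gamma_add_one {R x : ℝ} (hR : 0 < R) (hx : 0 ≤ x) :
    Real.exp (-R) * R ^ x ≤ Real.Gamma (x + 1) := by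
  have hint : IntegrableOn (fun t : ℝ => Real.exp (-t) * t ^ x) (Ioi 0) := by
    simpa using Real.GammaIntegral_convergent (s := x + 1) (by linarith)
  have hsub : Ioi R ⊆ Ioi (0 : ℝ) := Ioi_subset_Ioi hR.le
  rw [Real.Gamma_eq_integral (by linarith), ← integral_exp_neg_Ioi R,
    ← MeasureTheory.integral_mul_const]
  simp only [add_sub_cancel_right]
  calc ∫ t in Ioi R, Real.exp (-t) * R ^ x
      ≤ ∫ t in Ioi R, Real.exp (-t) * t ^ x := by
        refine setIntegral_mono_on ((integrableOn_exp_neg_Ioi R).mul_const _)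
          (hint.mono_set hsub) measurableSet_Ioi fun t ht => ?_
        have : R ≤ t := le_of_lt ht
        gcongr
    _ ≤ ∫ t in Ioi 0, Real.exp (-t) * t ^ x := by
        refine setIntegral_mono_set hint ?_ hsub.eventuallyLE
        filter_upwards [ae_restrict_mem measurableSet_Ioi] with t ht
        have : (0 : ℝ) < t := ht
        simp only [Pi.zero_apply]
        positivity

/-- The terms of the Mittag-Leffler series are nonnegative at nonnegative arguments. -/
theorem mittagLeffler_term_nonneg {β t : ℝ} (hβ : 0 < β) (ht : 0 ≤ t) (b : ℕ) :
    0 ≤ t ^ b / Real.Gamma (b * β + 1) :=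
  div_nonneg (pow_nonneg ht b) (Real.Gamma_pos_of_pos (by positivity)).le

/-- The Mittag-Leffler series converges at nonnegative arguments. -/
theorem summable_mittagLeffler {β t : ℝ} (hβ : 0 < β) (ht : 0 ≤ t) :
    Summable fun b : ℕ => t ^ b / Real.Gamma (b * β + 1) := by
  set R : ℝ := (2 * (t + 1)) ^ β⁻¹ with hR_def
  have hR : 0 < R := by positivity
  have hRβ : R ^ β = 2 * (t + 1) := Real.rpow_inv_rpow (by positivity) hβ.ne'
  refine Summable.of_nonneg_of_le (mittagLeffler_term_nonneg hβ ht) (fun b => ?_)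
    ((summable_geometric_of_lt_one (by norm_num) (by norm_num : (1 / 2 : ℝ) < 1)).mul_left
      (Real.exp R))
  have hpow : R ^ (b * β) = (2 * (t + 1)) ^ b := by
    rw [mul_comm, Real.rpow_mul hR.le, hRβ, Real.rpow_natCast]
  have hΓ := exp_neg_mul_rpow_le_Gamma_add_one hR (x := b * β) (by positivity)
  rw [hpow] at hΓ
  rw [div_le_iff₀ (Real.Gamma_pos_of_pos (by positivity))]
  calc t ^ b ≤ (t + 1) ^ b := by gcongr; linarith
    _ = Real.exp R * (1 / 2) ^ b * (Real.exp (-R) * (2 * (t + 1)) ^ b) := by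
        rw [Real.exp_neg, mul_pow, one_div, inv_pow]
        field_simp
    _ ≤ _ := by gcongr

theorem one_le_mittagLeffler {β t : ℝ} (hβ : 0 < β) (ht : 0 ≤ t) : 1 ≤ mittagLeffler β t := by
  simpa [mittagLeffler] using (summable_mittagLeffler hβ ht).le_tsum 0
    fun b _ => mittagLeffler_term_nonneg hβ ht b

theorem mittagLeffler_mono {β t u : ℝ} (hβ : 0 < β) (ht : 0 ≤ t) (htu : t ≤ u) :
    mittagLeffler β t ≤ mittagLeffler β u := by
  refine (summable_mittagLeffler hβ ht).tsum_le_tsum (fun b => ?_)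
    (summable_mittagLeffler hβ (ht.trans htu))
  have := Real.Gamma_pos_of_pos (show 0 < (b : ℝ) * β + 1 by positivity)
  gcongr

/-- The Beta integral over `[0, a]` with real exponents. -/
theorem integral_sub_rpow_mul_rpow {u v a : ℝ} (hu : 0 < u) (hv : 0 < v) (ha : 0 < a) :
    ∫ s in (0 : ℝ)..a, (a - s) ^ (v - 1) * s ^ (u - 1) =
      a ^ (u + v - 1) * (Real.Gamma u * Real.Gamma v / Real.Gamma (u + v)) := by
  have hΓ : Complex.betaIntegral u v =
      ((Real.Gamma u * Real.Gamma v / Real.Gamma (u + v) : ℝ) : ℂ) := by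
    rw [Complex.betaIntegral_eq_Gamma_mul_div _ _ (by simpa) (by simpa), ← Complex.ofReal_add]
    simp only [Complex.Gamma_ofReal]
    push_cast
    rfl
  have hs := Complex.betaIntegral_scaled u v ha
  rw [hΓ] at hs
  apply Complex.ofReal_injective
  rw [← intervalIntegral.integral_ofReal, Complex.ofReal_mul, Complex.ofReal_cpow ha.le]
  push_cast at hs ⊢
  rw [← hs]
  refine intervalIntegral.integral_congr fun s hs => ?_
  rw [uIcc_of_le ha.le] at hs
  rw [Complex.ofReal_cpow (sub_nonneg.2 hs.2), Complex.ofReal_cpow hs.1]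
  push_cast
  ring

/-- The Abel kernel times the Mittag-Leffler function is integrable. -/
theorem intervalIntegrable_sub_rpow_mul_mittagLeffler {β θ a : ℝ} (hβ : 0 < β) (hθ : 0 ≤ θ)
    (ha : 0 ≤ a) :
    IntervalIntegrable (fun s => (a - s) ^ (β - 1) * mittagLeffler β (θ * s ^ β)) volume 0 a := by
  have hker : IntervalIntegrable (fun s : ℝ => (a - s) ^ (β - 1)) volume 0 a := by
    simpa using ((intervalIntegral.intervalIntegrable_rpow' (a := 0) (b := a)
      (by linarith : -1 < β - 1)).comp_sub_left a).symm
  have hmono : MonotoneOn (fun s => mittagLeffler β (θ * s ^ β)) (Ioc 0 a) := fun s hs r _ hsr =>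
    mittagLeffler_mono hβ (mul_nonneg hθ (Real.rpow_nonneg hs.1.le _))
      (mul_le_mul_of_nonneg_left (Real.rpow_le_rpow hs.1.le hsr hβ.le) hθ)
  rw [intervalIntegrable_iff_integrableOn_Ioc_of_le ha] at hker ⊢
  refine Integrable.mul_bdd (c := mittagLeffler β (θ * a ^ β)) hker
    (aemeasurable_restrict_of_monotoneOn measurableSet_Ioc hmono).aestronglyMeasurable ?_
  filter_upwards [ae_restrict_mem measurableSet_Ioc] with s hs
  have hθs : 0 ≤ θ * s ^ β := mul_nonneg hθ (Real.rpow_nonneg hs.1.le _)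
  rw [Real.norm_of_nonneg (zero_le_one.trans (one_le_mittagLeffler hβ hθs))]
  exact hmono hs ⟨hs.1.trans_le hs.2, le_rfl⟩ hs.2

/-- The Riemann-Liouville integral of order `β` of `E_β(θ s^β)` is `(E_β(θ a^β) - 1) / θ`. -/
theorem integral_sub_rpow_mul_mittagLeffler {β θ a : ℝ} (hβ : 0 < β) (hθ : 0 < θ) (ha : 0 ≤ a) :
    ∫ s in (0 : ℝ)..a, (a - s) ^ (β - 1) * mittagLeffler β (θ * s ^ β) =
      Real.Gamma β * ((mittagLeffler β (θ * a ^ β) - 1) / θ) := by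
  rcases ha.eq_or_lt with rfl | ha
  · have h0 : mittagLeffler β 0 = 1 := by
      rw [mittagLeffler, tsum_eq_single 0 (by intro b hb; simp [hb])]
      simp
    simp [Real.zero_rpow hβ.ne', h0]
  let F : ℕ → ℝ → ℝ := fun b s =>
    (a - s) ^ (β - 1) * ((θ * s ^ β) ^ b / Real.Gamma (b * β + 1))
  have hF_nonneg : ∀ b, ∀ s ∈ Ioc 0 a, 0 ≤ F b s := fun b s hs =>
    mul_nonneg (Real.rpow_nonneg (sub_nonneg.2 hs.2) _)
      (mittagLeffler_term_nonneg hβ (mul_nonneg hθ.le (Real.rpow_nonneg hs.1.le _)) b)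
  have hF_sum : ∀ s ∈ Ioc 0 a, HasSum (fun b => F b s)
      ((a - s) ^ (β - 1) * mittagLeffler β (θ * s ^ β)) := fun s hs =>
    (summable_mittagLeffler hβ
      (mul_nonneg hθ.le (Real.rpow_nonneg hs.1.le _))).hasSum.mul_left _
  have hsum : HasSum (fun b => ∫ s in (0 : ℝ)..a, F b s)
      (∫ s in (0 : ℝ)..a, (a - s) ^ (β - 1) * mittagLeffler β (θ * s ^ β)) := by
    refine intervalIntegral.hasSum_integral_of_dominated_convergence F (fun b => ?_)
      (fun b => ?_) ?_ ?_ ?_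
    · exact Measurable.aestronglyMeasurable (by unfold F; fun_prop)
    · filter_upwards with s hs
      rw [uIoc_of_le ha.le] at hs
      rw [Real.norm_of_nonneg (hF_nonneg b s hs)]
    · filter_upwards with s hs
      rw [uIoc_of_le ha.le] at hs
      exact (hF_sum s hs).summable
    · refine (intervalIntegrable_sub_rpow_mul_mittagLeffler hβ hθ.le ha.le).congr fun s hs => ?_
      rw [uIoc_of_le ha.le] at hs
      exact (hF_sum s hs).tsum_eq.symm
    · filter_upwards with s hs
      rw [uIoc_of_le ha.le] at hs
      exact hF_sum s hs
  have hterm : ∀ b : ℕ, ∫ s in (0 : ℝ)..a, F b s = Real.Gamma β / θ *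
      ((θ * a ^ β) ^ (b + 1) / Real.Gamma ((b + 1 : ℕ) * β + 1)) := fun b => by
    have hΓ : Real.Gamma (b * β + 1) ≠ 0 := (Real.Gamma_pos_of_pos (by positivity)).ne'
    have hcongr : ∫ s in (0 : ℝ)..a, F b s = ∫ s in (0 : ℝ)..a,
        θ ^ b / Real.Gamma (b * β + 1) * ((a - s) ^ (β - 1) * s ^ ((b * β + 1) - 1)) := by
      refine intervalIntegral.integral_congr fun s hs => ?_
      rw [uIcc_of_le ha.le] at hs
      have : s ^ ((b * β + 1) - 1) = (s ^ β) ^ b := by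
        rw [add_sub_cancel_right, mul_comm, Real.rpow_mul hs.1, Real.rpow_natCast]
      simp only [F, this, mul_pow]
      ring
    have hpow : a ^ ((b * β + 1) + β - 1) = (a ^ β) ^ (b + 1) := by
      rw [← Real.rpow_natCast, ← Real.rpow_mul ha.le]
      congr 1
      push_cast
      ring
    have harg : ((b + 1 : ℕ) : ℝ) * β + 1 = (b * β + 1) + β := by
      push_cast
      ring
    rw [hcongr, intervalIntegral.integral_const_mul,
      integral_sub_rpow_mul_rpow (by positivity) hβ ha, hpow, harg, mul_pow]
    field_simp
    ring
  have htail : HasSum (fun b : ℕ => (θ * a ^ β) ^ (b + 1) / Real.Gamma ((b + 1 : ℕ) * β + 1))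
      (mittagLeffler β (θ * a ^ β) - 1) := by
    have := (hasSum_nat_add_iff' 1).2 (summable_mittagLeffler hβ
      (show 0 ≤ θ * a ^ β by positivity)).hasSum
    simpa [mittagLeffler] using this
  simp only [hterm] at hsum
  rw [hsum.unique (htail.mul_left _)]
  ring

/-- A function whose values are controlled by `ε` plus the Riemann-Liouville integral of
`L * E_β(θ (s - t₀)^β)` stays below `ε + L / θ * E_β(θ (t - t₀)^β)`. -/
theorem norm_add_smul_integral_le {E : Type*} [NormedAddCommGroup E] [NormedSpace ℝ E]
    {β θ t₀ t L ε : ℝ} (hβ : 0 < β) (hθ : 0 < θ) (ht : t₀ ≤ t) (hL : 0 ≤ L)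
    {c : E} (hc : ‖c‖ ≤ ε) {F : ℝ → E}
    (hF : ∀ s ∈ Icc t₀ t, ‖F s‖ ≤ L * mittagLeffler β (θ * (s - t₀) ^ β)) :
    ‖c + (Real.Gamma β)⁻¹ • ∫ s in t₀..t, (t - s) ^ (β - 1) • F s‖ ≤
      ε + L / θ * mittagLeffler β (θ * (t - t₀) ^ β) := by
  have hΓ := Real.Gamma_pos_of_pos hβ
  have hshift : (fun s => (t - s) ^ (β - 1) * mittagLeffler β (θ * (s - t₀) ^ β)) =
      fun s => (fun r => (t - t₀ - r) ^ (β - 1) * mittagLeffler β (θ * r ^ β)) (s - t₀) := by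
    funext s
    simp
  have hint : IntervalIntegrable
      (fun s => (t - s) ^ (β - 1) * mittagLeffler β (θ * (s - t₀) ^ β)) volume t₀ t := by
    rw [hshift]
    simpa using (intervalIntegrable_sub_rpow_mul_mittagLeffler hβ hθ.le
      (sub_nonneg.2 ht)).comp_sub_right t₀
  have hval : ∫ s in t₀..t, (t - s) ^ (β - 1) * mittagLeffler β (θ * (s - t₀) ^ β) =
      Real.Gamma β * ((mittagLeffler β (θ * (t - t₀) ^ β) - 1) / θ) := by
    rw [hshift, intervalIntegral.integral_comp_sub_right
      (fun r => (t - t₀ - r) ^ (β - 1) * mittagLeffler β (θ * r ^ β)), sub_self,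
      integral_sub_rpow_mul_mittagLeffler hβ hθ (sub_nonneg.2 ht)]
  have hbound : ‖∫ s in t₀..t, (t - s) ^ (β - 1) • F s‖ ≤
      L * (Real.Gamma β * ((mittagLeffler β (θ * (t - t₀) ^ β) - 1) / θ)) := by
    rw [← hval, ← intervalIntegral.integral_const_mul]
    refine intervalIntegral.norm_integral_le_of_norm_le ht ?_ (hint.const_mul L)
    filter_upwards with s hs
    have hk : 0 ≤ (t - s) ^ (β - 1) := Real.rpow_nonneg (sub_nonneg.2 hs.2) _
    rw [norm_smul, Real.norm_of_nonneg hk, mul_left_comm]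
    exact mul_le_mul_of_nonneg_left (hF s (Ioc_subset_Icc_self hs)) hk
  calc _ ≤ ‖c‖ + (Real.Gamma β)⁻¹ * ‖∫ s in t₀..t, (t - s) ^ (β - 1) • F s‖ := by
        refine (norm_add_le _ _).trans_eq ?_
        rw [norm_smul, Real.norm_of_nonneg (inv_pos.2 hΓ).le]
    _ ≤ ε + (Real.Gamma β)⁻¹ *
        (L * (Real.Gamma β * ((mittagLeffler β (θ * (t - t₀) ^ β) - 1) / θ))) := by gcongr
    _ = ε + L / θ * mittagLeffler β (θ * (t - t₀) ^ β) - L / θ := by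
        field_simp
        ring
    _ ≤ _ := sub_le_self _ (by positivity)

/-- Relaxed finite-time stability criterion. Under the standing assumptions, if there is
`η > 0` with
`D(ε₁, ρ) = (((a₀+a₁)/η) E_β((a₀+a₁+η)(T−t₀)^β) + 1) ε₁ + (a₂/η) E_β((a₀+a₁+η)(T−t₀)^β) ρ ≤ ε₂`,
then every solution of the Volterra integral equation with `‖ν‖ ≤ ε₁` and `‖d(t)‖ ≤ ρ`
satisfies `‖x(t)‖ ≤ ε₂` on `[t₀, T]`. -/
theorem relaxed_finite_time_stability {n p : ℕ} (β t₀ T g η : ℝ)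
    (hβ0 : 0 < β) (hβ1 : β < 1) (hT : t₀ < T) (hg : 0 ≤ g) (hη : 0 < η)
    (gdel : ℝ → ℝ) (hgdel_cont : ContinuousOn gdel (Icc t₀ T))
    (hgdel_mem : ∀ t ∈ Icc t₀ T, gdel t ∈ Icc 0 g)
    (A₀ A₁ : Euc n →L[ℝ] Euc n) (A₂ : Euc p →L[ℝ] Euc n)
    (κ : ℝ → ℝ) (hκ_cont : Continuous κ) (hκ_nonneg : ∀ s, 0 ≤ κ s)
    (f : ℝ → Euc n → Euc n → Euc p → Euc n)
    (hf_cont : Continuous fun q : ℝ × Euc n × Euc n × Euc p => f q.1 q.2.1 q.2.2.1 q.2.2.2)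
    (hf_lip : ∀ (s : ℝ) (u₁ u₂ : Euc n) (u₃ : Euc p) (w₁ w₂ : Euc n) (w₃ : Euc p),
      ‖f s u₁ u₂ u₃ - f s w₁ w₂ w₃‖ ≤ κ s * (‖u₁ - w₁‖ + ‖u₂ - w₂‖ + ‖u₃ - w₃‖))
    (hf_zero : ∀ s : ℝ, f s 0 0 0 = 0)
    (ρ : ℝ) (hρ : 0 < ρ) (d : ℝ → Euc p) (hd_cont : Continuous d) (hd : ∀ t, ‖d t‖ ≤ ρ)
    (ν : ℝ → Euc n) (hν : ContinuousOn ν (Icc (t₀ - g) t₀))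
    (a₀ a₁ a₂ : ℝ)
    (ha₀ : IsGreatest ((fun s => ‖A₀‖ + κ s) '' Icc t₀ T) a₀)
    (ha₁ : IsGreatest ((fun s => ‖A₁‖ + κ s) '' Icc t₀ T) a₁)
    (ha₂ : IsGreatest ((fun s => ‖A₂‖ + κ s) '' Icc t₀ T) a₂)
    (M : ℝ) (hM : M = sSup ((fun s : ℝ =>
      (s - t₀) ^ β / mittagLeffler β ((a₀ + a₁ + η) * (s - t₀) ^ β)) '' Icc t₀ T))
    (νnorm : ℝ) (hνnorm : νnorm = sSup ((fun s => ‖ν s‖) '' Icc (t₀ - g) t₀))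
    (ε₁ ε₂ : ℝ) (hε₁ : 0 < ε₁) (hε₁₂ : ε₁ < ε₂)
    (hD : ((a₀ + a₁) / η * mittagLeffler β ((a₀ + a₁ + η) * (T - t₀) ^ β) + 1) * ε₁ +
        a₂ / η * mittagLeffler β ((a₀ + a₁ + η) * (T - t₀) ^ β) * ρ ≤ ε₂)
    (hν_small : νnorm ≤ ε₁)
    (x : ℝ → Euc n) (hx_cont : ContinuousOn x (Icc (t₀ - g) T))
    (hx_init : ∀ s ∈ Icc (t₀ - g) t₀, x s = ν s)
    (hx_eq : ∀ t ∈ Icc t₀ T, x t = ν t₀ + (Real.Gamma β)⁻¹ •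
      ∫ s in t₀..t, ((t - s) ^ (β - 1)) •
        (A₀ (x s) + A₁ (x (s - gdel s)) + A₂ (d s)
          + f s (x s) (x (s - gdel s)) (d s))) :
    ∀ t ∈ Icc t₀ T, ‖x t‖ ≤ ε₂ := by
  have ht₀ : t₀ ∈ Icc t₀ T := ⟨le_rfl, hT.le⟩
  have hbound₀ : ∀ s ∈ Icc t₀ T, ‖A₀‖ + κ s ≤ a₀ := fun s hs => ha₀.2 (mem_image_of_mem _ hs)
  have hbound₁ : ∀ s ∈ Icc t₀ T, ‖A₁‖ + κ s ≤ a₁ := fun s hs => ha₁.2 (mem_image_of_mem _ hs)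
  have hbound₂ : ∀ s ∈ Icc t₀ T, ‖A₂‖ + κ s ≤ a₂ := fun s hs => ha₂.2 (mem_image_of_mem _ hs)
  have ha₀_nonneg : 0 ≤ a₀ := (add_nonneg (norm_nonneg _) (hκ_nonneg t₀)).trans (hbound₀ t₀ ht₀)
  have ha₁_nonneg : 0 ≤ a₁ := (add_nonneg (norm_nonneg _) (hκ_nonneg t₀)).trans (hbound₁ t₀ ht₀)
  have ha₂_nonneg : 0 ≤ a₂ := (add_nonneg (norm_nonneg _) (hκ_nonneg t₀)).trans (hbound₂ t₀ ht₀)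
  set θ := a₀ + a₁ + η with hθ_def
  have hθ : 0 < θ := by positivity
  set h : ℝ → ℝ := fun t => mittagLeffler β (θ * (t - t₀) ^ β) with h_def
  have harg : ∀ t, t₀ ≤ t → 0 ≤ θ * (t - t₀) ^ β := fun t ht =>
    mul_nonneg hθ.le (Real.rpow_nonneg (sub_nonneg.2 ht) _)
  have h_one : ∀ t, t₀ ≤ t → 1 ≤ h t := fun t ht => one_le_mittagLeffler hβ0 (harg t ht)
  have h_mono : ∀ s t, t₀ ≤ s → s ≤ t → h s ≤ h t := fun s t hs hst =>
    mittagLeffler_mono hβ0 (harg s hs) (mul_le_mul_of_nonneg_left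
      (Real.rpow_le_rpow (sub_nonneg.2 hs) (by linarith) hβ0.le) hθ.le)
  have hν_le : ∀ s ∈ Icc (t₀ - g) t₀, ‖ν s‖ ≤ ε₁ := fun s hs => by
    refine le_trans ?_ hν_small
    rw [hνnorm]
    exact le_csSup (isCompact_Icc.bddAbove_image hν.norm) (mem_image_of_mem _ hs)
  have hdelay : ∀ K, 0 ≤ K → (∀ t ∈ Icc t₀ T, ‖x t‖ ≤ ε₁ + K * h t) →
      ∀ s ∈ Icc t₀ T, ‖x (s - gdel s)‖ ≤ ε₁ + K * h s := fun K hK hx s hs => by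
    have hgs := hgdel_mem s hs
    rcases le_total (s - gdel s) t₀ with hle | hle
    · have hmem : s - gdel s ∈ Icc (t₀ - g) t₀ := ⟨by linarith [hs.1, hgs.2], hle⟩
      rw [hx_init _ hmem]
      have := mul_nonneg hK (zero_le_one.trans (h_one s hs.1))
      linarith [hν_le _ hmem]
    · have hles : s - gdel s ≤ s := by linarith [hgs.1]
      refine (hx _ ⟨hle, hles.trans hs.2⟩).trans ?_
      have := h_mono _ _ hle hles
      gcongr
  set C := ((a₀ + a₁) * ε₁ + a₂ * ρ) / η with hC_def
  have hC : 0 ≤ C := by positivity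
  have hCη : (a₀ + a₁) * ε₁ + a₂ * ρ = η * C := by
    rw [hC_def]
    field_simp
  have hstep : ∀ K, 0 ≤ K → (∀ t ∈ Icc t₀ T, ‖x t‖ ≤ ε₁ + K * h t) →
      ∀ t ∈ Icc t₀ T, ‖x t‖ ≤ ε₁ + (η * C + (a₀ + a₁) * K) / θ * h t := fun K hK hx t ht => by
    rw [hx_eq t ht]
    refine norm_add_smul_integral_le hβ0 hθ ht.1 (by positivity)
      (hν_le t₀ ⟨by linarith, le_rfl⟩) fun s hs => ?_
    have hsT : s ∈ Icc t₀ T := ⟨hs.1, hs.2.trans ht.2⟩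
    have hf := hf_lip s (x s) (x (s - gdel s)) (d s) 0 0 0
    simp only [hf_zero, sub_zero] at hf
    have hnorm : ‖A₀ (x s) + A₁ (x (s - gdel s)) + A₂ (d s)
        + f s (x s) (x (s - gdel s)) (d s)‖ ≤
        (‖A₀‖ + κ s) * ‖x s‖ + (‖A₁‖ + κ s) * ‖x (s - gdel s)‖ + (‖A₂‖ + κ s) * ‖d s‖ := by
      refine (norm_add₄_le).trans ?_
      linarith [A₀.le_opNorm (x s), A₁.le_opNorm (x (s - gdel s)), A₂.le_opNorm (d s)]
    calc _ ≤ (‖A₀‖ + κ s) * ‖x s‖ + (‖A₁‖ + κ s) * ‖x (s - gdel s)‖ + (‖A₂‖ + κ s) * ‖d s‖ := hnorm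
      _ ≤ a₀ * (ε₁ + K * h s) + a₁ * (ε₁ + K * h s) + a₂ * ρ := by
          gcongr
          · exact hbound₀ s hsT
          · exact hx s hsT
          · exact hbound₁ s hsT
          · exact hdelay K hK hx s hsT
          · exact hbound₂ s hsT
          · exact hd s
      _ = η * C * 1 + (a₀ + a₁) * K * h s := by
          rw [← hCη]
          ring
      _ ≤ η * C * h s + (a₀ + a₁) * K * h s := by
          have := h_one s hs.1
          gcongr
      _ = (η * C + (a₀ + a₁) * K) * h s := by ring
  obtain ⟨B, hB⟩ := isCompact_Icc.exists_bound_of_continuousOn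
    (hx_cont.mono (Icc_subset_Icc_left (by linarith : t₀ - g ≤ t₀)))
  have hB_nonneg : 0 ≤ B := (norm_nonneg _).trans (hB t₀ ht₀)
  set q := (a₀ + a₁) / θ with hq_def
  have hq_nonneg : 0 ≤ q := by positivity
  have hq_lt : q < 1 := (div_lt_one hθ).2 (by linarith)
  have hiter : ∀ k : ℕ, ∀ t ∈ Icc t₀ T, ‖x t‖ ≤ ε₁ + (C + q ^ k * B) * h t := fun k => by
    induction k with
    | zero =>
      intro t ht
      have h1 := h_one t ht.1
      have h2 : C + B ≤ (C + B) * h t := le_mul_of_one_le_right (by positivity) h1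
      rw [pow_zero, one_mul]
      linarith [hB t ht]
    | succ k ih =>
      have heq : (η * C + (a₀ + a₁) * (C + q ^ k * B)) / θ = C + q ^ (k + 1) * B := by
        rw [pow_succ, hq_def, div_eq_iff hθ.ne', hθ_def]
        field_simp
        ring
      rw [← heq]
      exact hstep _ (by positivity) ih
  intro t ht
  have hlim : ‖x t‖ ≤ ε₁ + C * h t := by
    refine ge_of_tendsto' (x := Filter.atTop) ?_ fun k => hiter k t ht
    simpa using ((((tendsto_pow_atTop_nhds_zero_of_lt_one hq_nonneg hq_lt).mul_const B).const_add
      C).mul_const (h t)).const_add ε₁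
  calc ‖x t‖ ≤ ε₁ + C * h t := hlim
    _ ≤ ε₁ + C * h T := by
        have := h_mono t T ht.1 ht.2
        gcongr
    _ = ((a₀ + a₁) / η * h T + 1) * ε₁ + a₂ / η * h T * ρ := by
        rw [hC_def]
        field_simp
        ring
    _ ≤ ε₂ := hD
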